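/- Suppose n ≥ 3 and V ∈ B_q for some q > n/2. Then there exist constants c > 0 and C ≥ 1 such that whenever x, y ∈ ℝⁿ satisfy |x − y| ≤ c ρ(x), one has C⁻¹ ρ(x) ≤ ρ(y) ≤ C ρ(x). -/

import Mathlib

open MeasureTheory Metric Set Filter

noncomputable section

/-- `ℝⁿ` as Euclidean space. -/
abbrev En (n : ℕ) := EuclideanSpace ℝ (Fin n)

/-- The critical radius function `ρ(x)` associated to a potential `V`. -/
def critRad (n : ℕ) (V : En n → ℝ) (x : En n) : ℝ :=
  sSup {r : ℝ | 0 < r ∧ r ^ (2 - (n : ℝ)) * ∫ y in ball x r, V y ≤ 1}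

/-- `V` belongs to the reverse Hölder class `B_q` with constant `C`. -/
def ReverseHolder (n : ℕ) (V : En n → ℝ) (q C : ℝ) : Prop :=
  (∀ x, 0 ≤ V x) ∧ (∃ x, V x ≠ 0) ∧
  (∀ (x : En n) (r : ℝ), 0 < r → IntegrableOn (fun y => V y ^ q) (ball x r) volume) ∧
  (∀ (x : En n) (r : ℝ), 0 < r →
    ((volume (ball x r)).toReal⁻¹ * ∫ y in ball x r, V y ^ q) ^ (1 / q)
      ≤ C * ((volume (ball x r)).toReal⁻¹ * ∫ y in ball x r, V y))

/-!
Hölder's inequality and the reverse Hölder inequality give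
`∫_{B(x,tr)} V ≤ C t^{d(1-1/q)} ∫_{B(x,r)} V` for `0 < t ≤ 1`, so the normalized mass
`ψ(x,r) = r^{2-d} ∫_{B(x,r)} V` satisfies `ψ(x,tr) ≤ C t^{2-d/q} ψ(x,r)`, where the exponent is
positive because `q > d/2`. If `|x-y| ≤ r/2` and `ψ(x,r) ≤ 1`, then `B(y,r/2) ⊆ B(x,r)` bounds
`ψ(y,r/2)` by a constant, hence `ψ(y,tr/2) ≤ 1` for a small `t` independent of `x`, `y`, `r`.
Applied in both directions between `x` and `y`, this transfer of admissible radii compares the two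
suprema. Any `α > d/q` can take the place of the exponent `2`.
-/

section Measure

variable {Ω : Type*} [MeasurableSpace Ω] {μ : Measure Ω} {f : Ω → ℝ} {q : ℝ}

lemma memLp_of_integrable_rpow (hq : 0 < q) (hf : 0 ≤ f)
    (hint : Integrable (fun ω => f ω ^ q) μ) : MemLp f (ENNReal.ofReal q) μ := by
  have hroot : (fun ω => (f ω ^ q) ^ q⁻¹) = f :=
    funext fun ω => Real.rpow_rpow_inv (hf ω) hq.ne'
  have hmeas : AEStronglyMeasurable f μ :=
    hroot ▸ (hint.aestronglyMeasurable.aemeasurable.pow_const q⁻¹).aestronglyMeasurable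
  rw [← integrable_norm_rpow_iff hmeas (by simpa using hq) ENNReal.ofReal_ne_top,
    ENNReal.toReal_ofReal hq.le]
  simpa only [fun ω => Real.norm_of_nonneg (hf ω)] using hint

lemma integral_le_integral_rpow_mul_measureReal_univ_rpow [IsFiniteMeasure μ] (hq : 1 < q)
    (hf : 0 ≤ f) (hint : Integrable (fun ω => f ω ^ q) μ) :
    ∫ ω, f ω ∂μ ≤ (∫ ω, f ω ^ q ∂μ) ^ (1 / q) * μ.real univ ^ (1 - 1 / q) := by
  have hconj : q.HolderConjugate q.conjExponent := .conjExponent hq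
  have hexp : 1 / q.conjExponent = 1 - 1 / q := by
    simpa only [one_div] using hconj.one_sub_inv.symm
  simpa [hexp] using integral_mul_le_Lp_mul_Lq_of_nonneg hconj (.of_forall hf)
    (.of_forall fun _ => zero_le_one) (memLp_of_integrable_rpow (by linarith) hf hint)
    (memLp_const (1 : ℝ))

lemma setIntegral_le_of_average_rpow_le {C : ℝ} {s b : Set Ω} (hq : 1 < q) (hf : 0 ≤ f)
    (hsb : s ⊆ b) (hb₀ : μ b ≠ 0) (hb : μ b ≠ ⊤)
    (hint : IntegrableOn (fun ω => f ω ^ q) b μ)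
    (havg : (⨍ ω in b, f ω ^ q ∂μ) ^ (1 / q) ≤ C * ⨍ ω in b, f ω ∂μ) :
    ∫ ω in s, f ω ∂μ ≤ C * (μ.real s / μ.real b) ^ (1 - 1 / q) * ∫ ω in b, f ω ∂μ := by
  have hm : 0 < μ.real b := ENNReal.toReal_pos hb₀ hb
  have hfq : 0 ≤ fun ω => f ω ^ q := fun ω => Real.rpow_nonneg (hf ω) q
  have havg_nonneg : 0 ≤ ⨍ ω in b, f ω ^ q ∂μ := integral_nonneg hfq
  have hfinite : IsFiniteMeasure (μ.restrict s) :=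
    isFiniteMeasure_restrict.2 (measure_ne_top_of_subset hsb hb)
  have hholder : ∫ ω in s, f ω ∂μ ≤ (∫ ω in s, f ω ^ q ∂μ) ^ (1 / q) * μ.real s ^ (1 - 1 / q) := by
    simpa using integral_le_integral_rpow_mul_measureReal_univ_rpow hq hf (hint.mono_set hsb)
  have hmono : ∫ ω in s, f ω ^ q ∂μ ≤ μ.real b * ⨍ ω in b, f ω ^ q ∂μ := by
    rw [← smul_eq_mul, measure_smul_setAverage _ hb]
    exact setIntegral_mono_set hint (.of_forall hfq) hsb.eventuallyLE
  calc ∫ ω in s, f ω ∂μ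
      ≤ (∫ ω in s, f ω ^ q ∂μ) ^ (1 / q) * μ.real s ^ (1 - 1 / q) := hholder
    _ ≤ (μ.real b * ⨍ ω in b, f ω ^ q ∂μ) ^ (1 / q) * μ.real s ^ (1 - 1 / q) := by
      gcongr
      exact integral_nonneg hfq
    _ = μ.real b ^ (1 / q) * (⨍ ω in b, f ω ^ q ∂μ) ^ (1 / q) * μ.real s ^ (1 - 1 / q) := by
      rw [Real.mul_rpow hm.le havg_nonneg]
    _ ≤ μ.real b ^ (1 / q) * (C * ⨍ ω in b, f ω ∂μ) * μ.real s ^ (1 - 1 / q) := by gcongr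
    _ = C * (μ.real s / μ.real b) ^ (1 - 1 / q) * ∫ ω in b, f ω ∂μ := by
      rw [setAverage_eq, smul_eq_mul, Real.div_rpow measureReal_nonneg hm.le,
        Real.rpow_sub hm, Real.rpow_one]
      field_simp

end Measure

open Topology in
lemma exists_mul_rpow_le_one (K : ℝ) {δ : ℝ} (hδ : 0 < δ) :
    ∃ t : ℝ, 0 < t ∧ t ≤ 1 ∧ K * t ^ δ ≤ 1 := by
  have hlim : Tendsto (fun t : ℝ => K * t ^ δ) (𝓝[>] 0) (𝓝 0) := by
    have hcont : ContinuousAt (fun t : ℝ => K * t ^ δ) 0 :=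
      (Real.continuousAt_rpow_const 0 δ (.inr hδ.le)).const_mul K
    simpa [Real.zero_rpow hδ.ne'] using hcont.tendsto.mono_left nhdsWithin_le_nhds
  obtain ⟨t, hK, ht, ht₁⟩ :=
    ((hlim.eventually_le_const one_pos).and (Ioc_mem_nhdsGT one_pos)).exists
  exact ⟨t, ht, ht₁, hK⟩

lemma sSup_comparable_of_forall_mul_mem {X : Type*} [MetricSpace X] {A : X → Set ℝ} {t : ℝ}
    (hA : ∀ x, ∀ r ∈ A x, 0 < r) (ht : 0 < t) (ht₁ : t ≤ 1)
    (htransfer : ∀ x y, ∀ r ∈ A x, dist x y ≤ r / 2 → t * r ∈ A y) {x y : X}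
    (hxy : dist x y ≤ 1 / 4 * sSup (A x)) :
    (2 / t)⁻¹ * sSup (A x) ≤ sSup (A y) ∧ sSup (A y) ≤ 2 / t * sSup (A x) := by
  have hnonneg : 0 ≤ sSup (A x) := Real.sSup_nonneg fun r hr => (hA x r hr).le
  -- A vanishing supremum may be a junk value (`A x` empty or unbounded), but then `x = y`.
  rcases hnonneg.eq_or_lt with hzero | hpos
  · obtain rfl : x = y := dist_le_zero.1 (by simpa [← hzero] using hxy)
    simp [← hzero]
  have hbdd : BddAbove (A x) := by
    by_contra h
    exact hpos.ne' (Real.sSup_of_not_bddAbove h)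
  have hne : (A x).Nonempty := by
    by_contra! h
    simp [h] at hpos
  have hupper : ∀ r ∈ A y, r ≤ 2 / t * sSup (A x) := by
    intro r hr
    rw [div_mul_eq_mul_div, le_div_iff₀ ht]
    rcases le_or_gt (dist y x) (r / 2) with hnear | hfar
    · linarith [le_csSup hbdd (htransfer y x r hr hnear)]
    · rw [dist_comm] at hfar
      nlinarith [hA y r hr]
  obtain ⟨r, hr, hlt⟩ := exists_lt_of_lt_csSup hne (half_lt_self hpos)
  have htr : t * r ∈ A y := htransfer x y r hr (by linarith)
  refine ⟨?_, csSup_le ⟨_, htr⟩ hupper⟩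
  calc (2 / t)⁻¹ * sSup (A x) = t * (sSup (A x) / 2) := by rw [inv_div]; ring
    _ ≤ t * r := by gcongr
    _ ≤ sSup (A y) := le_csSup ⟨_, hupper⟩ htr

section ReverseHolderClass

variable {X : Type*} [PseudoMetricSpace X] [MeasurableSpace X]

/-- Membership of `V` in the reverse Hölder class `B_q` with constant `C`, with respect to a
measure `μ` on a pseudometric space. -/
structure IsReverseHolder (μ : Measure X) (V : X → ℝ) (q C : ℝ) : Prop where
  nonneg : 0 ≤ V
  ne_zero : V ≠ 0
  integrableOn_rpow : ∀ x r, 0 < r → IntegrableOn (fun y => V y ^ q) (ball x r) μ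
  average_rpow_le : ∀ x r, 0 < r →
    (⨍ y in ball x r, V y ^ q ∂μ) ^ (1 / q) ≤ C * ⨍ y in ball x r, V y ∂μ

lemma IsReverseHolder.integrableOn_ball [ProperSpace X] {μ : Measure X}
    [IsFiniteMeasureOnCompacts μ] {V : X → ℝ} {q C r : ℝ} (hV : IsReverseHolder μ V q C)
    (hq : 1 ≤ q) (x : X) (hr : 0 < r) :
    IntegrableOn V (ball x r) μ := by
  have hfinite : IsFiniteMeasure (μ.restrict (ball x r)) :=
    isFiniteMeasure_restrict.2 measure_ball_lt_top.ne
  exact (memLp_of_integrable_rpow (by linarith) hV.nonneg (hV.integrableOn_rpow x r hr)).integrable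
    (by simpa using hq)

end ReverseHolderClass

section CriticalRadius

open Module

variable {E : Type*} [NormedAddCommGroup E] [NormedSpace ℝ E] [MeasurableSpace E]

/-- The mass of `V` on `B(x, r)` normalized by `r ^ (α - d)`, `d` being the dimension of `E`. The
classical case is `α = 2`, when it is invariant under the scaling `V ↦ s² V(s ·)` of Schrödinger
potentials. -/
def normalizedMass (μ : Measure E) (α : ℝ) (V : E → ℝ) (x : E) (r : ℝ) : ℝ :=
  r ^ (α - finrank ℝ E) * ∫ y in ball x r, V y ∂μ

/-- The radii over which the critical radius at `x` is the supremum. -/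
def admissibleRadii (μ : Measure E) (α : ℝ) (V : E → ℝ) (x : E) : Set ℝ :=
  {r | 0 < r ∧ normalizedMass μ α V x r ≤ 1}

/-- The critical radius of `V` at `x` of order `α`; the value is `0` when the set of admissible
radii is empty or unbounded. -/
def criticalRadius (μ : Measure E) (α : ℝ) (V : E → ℝ) (x : E) : ℝ :=
  sSup (admissibleRadii μ α V x)

variable {μ : Measure E} {V : E → ℝ} {α q C r t : ℝ} {x y : E}

lemma normalizedMass_half_le (hV : 0 ≤ V) (hint : IntegrableOn V (ball x r) μ) (hr : 0 ≤ r)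
    (hxy : dist x y ≤ r / 2) :
    normalizedMass μ α V y (r / 2) ≤ (1 / 2) ^ (α - finrank ℝ E) * normalizedMass μ α V x r := by
  have hsub : ball y (r / 2) ⊆ ball x r := ball_subset_ball' (by rw [dist_comm]; linarith)
  have hmono : ∫ z in ball y (r / 2), V z ∂μ ≤ ∫ z in ball x r, V z ∂μ :=
    setIntegral_mono_set hint (.of_forall hV) hsub.eventuallyLE
  calc normalizedMass μ α V y (r / 2)
      ≤ (r / 2) ^ (α - finrank ℝ E) * ∫ z in ball x r, V z ∂μ := by
        unfold normalizedMass
        gcongr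
    _ = (1 / 2) ^ (α - finrank ℝ E) * normalizedMass μ α V x r := by
      rw [normalizedMass, ← mul_assoc, ← Real.mul_rpow (by norm_num) hr, one_div_mul_eq_div]

variable [BorelSpace E] [FiniteDimensional ℝ E] [μ.IsAddHaarMeasure]

lemma measureReal_ball_mul_div (x : E) (hr : 0 < r) (ht : 0 < t) :
    μ.real (ball x (t * r)) / μ.real (ball x r) = t ^ (finrank ℝ E : ℝ) := by
  have hball : μ.real (ball x r) ≠ 0 :=
    (ENNReal.toReal_pos (measure_ball_pos μ x hr).ne' measure_ball_lt_top.ne).ne'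
  rw [div_eq_iff hball, measureReal_def, Measure.addHaar_ball_mul_of_pos μ x ht,
    ENNReal.toReal_mul, ENNReal.toReal_ofReal (by positivity), Real.rpow_natCast,
    ← measureReal_def, ← Measure.addHaar_real_ball_center]

namespace IsReverseHolder

lemma setIntegral_ball_mul_le (hV : IsReverseHolder μ V q C) (hq : 1 < q) (x : E) (hr : 0 < r)
    (ht : 0 < t) (ht₁ : t ≤ 1) :
    ∫ y in ball x (t * r), V y ∂μ
      ≤ C * t ^ (finrank ℝ E * (1 - 1 / q)) * ∫ y in ball x r, V y ∂μ := by
  have hsub : ball x (t * r) ⊆ ball x r := ball_subset_ball (mul_le_of_le_one_left hr.le ht₁)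
  simpa only [measureReal_ball_mul_div x hr ht, ← Real.rpow_mul ht.le] using
    setIntegral_le_of_average_rpow_le hq hV.nonneg hsub (measure_ball_pos μ x hr).ne'
      measure_ball_lt_top.ne (hV.integrableOn_rpow x r hr) (hV.average_rpow_le x r hr)

lemma normalizedMass_mul_le (hV : IsReverseHolder μ V q C) (hq : 1 < q) (x : E) (hr : 0 < r)
    (ht : 0 < t) (ht₁ : t ≤ 1) :
    normalizedMass μ α V x (t * r)
      ≤ C * t ^ (α - finrank ℝ E / q) * normalizedMass μ α V x r := by
  have hexp : t ^ (α - finrank ℝ E / q)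
      = t ^ (α - finrank ℝ E) * t ^ (finrank ℝ E * (1 - 1 / q)) := by
    rw [← Real.rpow_add ht]
    ring_nf
  calc normalizedMass μ α V x (t * r)
      ≤ (t * r) ^ (α - finrank ℝ E)
          * (C * t ^ (finrank ℝ E * (1 - 1 / q)) * ∫ y in ball x r, V y ∂μ) := by
        unfold normalizedMass
        gcongr
        exact hV.setIntegral_ball_mul_le hq x hr ht ht₁
    _ = C * t ^ (α - finrank ℝ E / q) * normalizedMass μ α V x r := by
      rw [normalizedMass, hexp, Real.mul_rpow ht.le hr.le]
      ring

lemma exists_forall_mul_mem_admissibleRadii (hV : IsReverseHolder μ V q C) (hC : 0 ≤ C)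
    (hq : 1 < q) (hα : finrank ℝ E / q < α) :
    ∃ t : ℝ, 0 < t ∧ t ≤ 1 ∧ ∀ x y, ∀ r ∈ admissibleRadii μ α V x, dist x y ≤ r / 2 →
      t * r ∈ admissibleRadii μ α V y := by
  obtain ⟨t, ht, ht₁, hsmall⟩ := exists_mul_rpow_le_one (C * (1 / 2) ^ (α - finrank ℝ E))
    (sub_pos.2 hα)
  refine ⟨t / 2, by positivity, by linarith, fun x y r ⟨hr, hmass⟩ hxy => ⟨by positivity, ?_⟩⟩
  have hhalf : normalizedMass μ α V y (r / 2) ≤ (1 / 2) ^ (α - finrank ℝ E) :=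
    (normalizedMass_half_le hV.nonneg (hV.integrableOn_ball hq.le x hr) hr.le hxy).trans
      (mul_le_of_le_one_right (by positivity) hmass)
  calc normalizedMass μ α V y (t / 2 * r) = normalizedMass μ α V y (t * (r / 2)) := by
        rw [div_mul_eq_mul_div, mul_div_assoc]
    _ ≤ C * t ^ (α - finrank ℝ E / q) * normalizedMass μ α V y (r / 2) :=
        hV.normalizedMass_mul_le hq y (by positivity) ht ht₁
    _ ≤ C * t ^ (α - finrank ℝ E / q) * (1 / 2) ^ (α - finrank ℝ E) := by gcongr
    _ ≤ 1 := by linarith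

end IsReverseHolder

theorem stmt_1_general (hV : IsReverseHolder μ V q C) (hC : 0 < C) (hq : 1 < q)
    (hα : finrank ℝ E / q < α) :
    ∃ c K : ℝ, 0 < c ∧ 1 ≤ K ∧ ∀ x y : E, dist x y ≤ c * criticalRadius μ α V x →
      K⁻¹ * criticalRadius μ α V x ≤ criticalRadius μ α V y ∧
        criticalRadius μ α V y ≤ K * criticalRadius μ α V x := by
  obtain ⟨t, ht, ht₁, htransfer⟩ := hV.exists_forall_mul_mem_admissibleRadii hC.le hq hα
  refine ⟨1 / 4, 2 / t, by norm_num, by rw [le_div_iff₀ ht]; linarith, fun x y hxy => ?_⟩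
  exact sSup_comparable_of_forall_mul_mem (fun _ _ hr => hr.1) ht ht₁ htransfer hxy

end CriticalRadius

lemma critRad_eq_criticalRadius (n : ℕ) (V : En n → ℝ) :
    critRad n V = criticalRadius volume 2 V := by
  funext x
  simp only [critRad, criticalRadius, admissibleRadii, normalizedMass, finrank_euclideanSpace_fin]

lemma ReverseHolder.isReverseHolder {n : ℕ} {V : En n → ℝ} {q C : ℝ}
    (hV : ReverseHolder n V q C) : IsReverseHolder volume V q C where
  nonneg := hV.1
  ne_zero := Function.ne_iff.2 hV.2.1
  integrableOn_rpow := hV.2.2.1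
  average_rpow_le x r hr := by
    simpa only [setAverage_eq, measureReal_def, smul_eq_mul] using hV.2.2.2 x r hr

theorem stmt_1 (n : ℕ) (hn : 3 ≤ n) (V : En n → ℝ) (q C₀ : ℝ)
    (hq : (n : ℝ) / 2 < q) (hC₀ : 0 < C₀) (hV : ReverseHolder n V q C₀) :
    ∃ c C : ℝ, 0 < c ∧ 1 ≤ C ∧ ∀ x y : En n, dist x y ≤ c * critRad n V x →
      C⁻¹ * critRad n V x ≤ critRad n V y ∧ critRad n V y ≤ C * critRad n V x := by
  have hn' : (3 : ℝ) ≤ n := by exact_mod_cast hn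
  have hdim : (Module.finrank ℝ (En n) : ℝ) / q < 2 := by
    rw [finrank_euclideanSpace_fin, div_lt_iff₀ (by linarith)]
    linarith
  simpa only [critRad_eq_criticalRadius] using
    stmt_1_general hV.isReverseHolder hC₀ (by linarith) hdim
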